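/- arXiv:math/0205241 — 3 statements merged into one kernel-verified Lean document; each statement's English description precedes it below -/
import Mathlib

section
/- Let φ be subharmonic with doubling Laplacian, ρ the associated radius function and d_φ the induced distance. If Λ ⊂ ℂ is a ρ-separated sequence, then there exists m ∈ ℕ such that sup_{z∈ℂ} Σ_{λ∈Λ} 1/(1 + d_φ(z,λ)^m) < ∞. Moreover, lim_{r→∞} sup_{z∈ℂ} Σ_{λ∈Λ, d_φ(z,λ)≥r} d_φ(z,λ)^{-m} = 0. -/
open MeasureTheory Metric Filter Set
open scoped ENNReal NNReal Real Topology Classical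

noncomputable section

/-- The Laplacian of a function on `ℂ ≅ ℝ²`, computed via the second Fréchet derivative. -/
def lap (v : ℂ → ℝ) (z : ℂ) : ℝ :=
  iteratedFDeriv ℝ 2 v z ![1, 1] + iteratedFDeriv ℝ 2 v z ![Complex.I, Complex.I]

/-- `μ` is a doubling measure on `ℂ` with doubling constant `C`. -/
def IsDoubling (μ : Measure ℂ) (C : ℝ≥0) : Prop :=
  ∀ z : ℂ, ∀ r : ℝ, 0 < r → μ (ball z (2 * r)) ≤ C * μ (ball z r)

/-- `φ` is a (continuous) subharmonic function whose distributional Laplacian is the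
doubling measure `μ` (not identically zero).  The distributional identity is expressed
by testing against smooth compactly supported functions. -/
structure HasDoublingLaplacian (φ : ℂ → ℝ) (μ : Measure ℂ) : Prop where
  continuous : Continuous φ
  lap_eq : ∀ v : ℂ → ℝ, ContDiff ℝ (⊤ : ℕ∞) v → HasCompactSupport v →
    ∫ z, φ z * lap v z = ∫ z, v z ∂μ
  doubling : ∃ C : ℝ≥0, 0 < C ∧ IsDoubling μ C
  ne_zero : μ ≠ 0

/-- `ρ` assigns to every `z` the positive radius such that the disk `D(z, ρ z)` has
`μ`-mass `1`. -/
def IsRadius (μ : Measure ℂ) (ρ : ℂ → ℝ) : Prop :=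
  ∀ z : ℂ, 0 < ρ z ∧ μ (ball z (ρ z)) = 1

/-- The distance induced by the metric `ρ(z)⁻² dz⊗d\bar z`: infimum of lengths of
`C¹` curves joining the two points. -/
def pathDist (ρ : ℂ → ℝ) (z ζ : ℂ) : ℝ :=
  sInf { L : ℝ | ∃ γ : ℝ → ℂ, γ 0 = z ∧ γ 1 = ζ ∧ ContDiff ℝ 1 γ ∧
    L = ∫ t in (0:ℝ)..1, ‖deriv γ t‖ / ρ (γ t) }

/-- The `pathDist` from a point to a set. -/
def pathDistSet (ρ : ℂ → ℝ) (z : ℂ) (Λ : Set ℂ) : ℝ :=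
  ⨅ l : Λ, pathDist ρ z l.1

/-- A flat weight for `φ`: a positive measurable function whose logarithm has slow
growth with respect to the induced distance. -/
def IsFlatWeight (ρ : ℂ → ℝ) (ω : ℂ → ℝ) : Prop :=
  (∀ z, 0 < ω z) ∧ Measurable ω ∧
  ∃ C : ℝ, 0 < C ∧ ∀ z ζ : ℂ,
    |Real.log (ω z) - Real.log (ω ζ)| ≤ C * (1 + max (Real.log (pathDist ρ z ζ)) 0)

/-- The norm of the space `F^p_{φ,ω}` (with `p = ∞` giving the weighted sup norm). -/
def Fnorm (p : ℝ≥0∞) (φ ω ρ : ℂ → ℝ) (f : ℂ → ℂ) : ℝ≥0∞ :=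
  if p = ∞ then ⨆ z : ℂ, ENNReal.ofReal (ω z * ‖f z‖ * Real.exp (-φ z))
  else (∫⁻ z, ENNReal.ofReal
      (‖f z‖ ^ p.toReal * Real.exp (-(p.toReal * φ z)) * ω z ^ p.toReal / ρ z ^ 2)) ^
      (1 / p.toReal)

/-- Membership in `F^p_{φ,ω}`: entire with finite norm. -/
def MemF (p : ℝ≥0∞) (φ ω ρ : ℂ → ℝ) (f : ℂ → ℂ) : Prop :=
  Differentiable ℂ f ∧ Fnorm p φ ω ρ f < ∞

/-- The norm of the sequence space `ℓ^p_{φ,ω}(Λ)`. -/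
def lnorm (p : ℝ≥0∞) (φ ω : ℂ → ℝ) (Λ : Set ℂ) (v : ℂ → ℂ) : ℝ≥0∞ :=
  if p = ∞ then ⨆ l : Λ, ENNReal.ofReal (ω l.1 * ‖v l.1‖ * Real.exp (-φ l.1))
  else (∑' l : Λ, ENNReal.ofReal
      (ω l.1 ^ p.toReal * ‖v l.1‖ ^ p.toReal * Real.exp (-(p.toReal * φ l.1)))) ^
      (1 / p.toReal)

/-- `Λ` is a sampling sequence for `F^p_{φ,ω}`. -/
def IsSampling (p : ℝ≥0∞) (φ ω ρ : ℂ → ℝ) (Λ : Set ℂ) : Prop :=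
  if p = ∞ then
    ∃ C : ℝ≥0, 0 < C ∧ ∀ f : ℂ → ℂ, MemF ∞ φ ω ρ f →
      Fnorm ∞ φ ω ρ f ≤ C * lnorm ∞ φ ω Λ f
  else
    ∃ C : ℝ≥0, 0 < C ∧ ∀ f : ℂ → ℂ, MemF p φ ω ρ f →
      (C : ℝ≥0∞)⁻¹ * lnorm p φ ω Λ f ≤ Fnorm p φ ω ρ f ∧
      Fnorm p φ ω ρ f ≤ C * lnorm p φ ω Λ f

/-- `Λ` is an interpolating sequence for `F^p_{φ,ω}`. -/
def IsInterpolating (p : ℝ≥0∞) (φ ω ρ : ℂ → ℝ) (Λ : Set ℂ) : Prop :=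
  ∀ v : ℂ → ℂ, lnorm p φ ω Λ v < ∞ →
    ∃ f : ℂ → ℂ, MemF p φ ω ρ f ∧ ∀ l ∈ Λ, f l = v l

/-- `Λ` is `ρ`-separated. -/
def RhoSeparated (ρ : ℂ → ℝ) (Λ : Set ℂ) : Prop :=
  ∃ δ : ℝ, 0 < δ ∧ ∀ l ∈ Λ, ∀ l' ∈ Λ, l ≠ l' → δ * max (ρ l) (ρ l') ≤ dist l l'

/-- `Λ` is a finite union of `ρ`-separated sequences. -/
def FiniteUnionSeparated (ρ : ℂ → ℝ) (Λ : Set ℂ) : Prop :=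
  ∃ n : ℕ, ∃ Λs : Fin n → Set ℂ, Λ = ⋃ i, Λs i ∧ ∀ i, RhoSeparated ρ (Λs i)

/-- Upper uniform density of `Λ` with respect to the doubling measure `μ`. -/
def upperUnifDensity (μ : Measure ℂ) (ρ : ℂ → ℝ) (Λ : Set ℂ) : ℝ≥0∞ :=
  limsup (fun r : ℝ =>
    ⨆ z : ℂ, Measure.count (Λ ∩ closedBall z (r * ρ z)) / μ (ball z (r * ρ z))) atTop

/-- Lower uniform density of `Λ` with respect to the doubling measure `μ`. -/
def lowerUnifDensity (μ : Measure ℂ) (ρ : ℂ → ℝ) (Λ : Set ℂ) : ℝ≥0∞ :=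
  liminf (fun r : ℝ =>
    ⨅ z : ℂ, Measure.count (Λ ∩ closedBall z (r * ρ z)) / μ (ball z (r * ρ z))) atTop

/-- The Cauchy–Riemann operator `∂̄` on `ℂ`-valued functions. -/
def dbar (v : ℂ → ℂ) (z : ℂ) : ℂ :=
  (fderiv ℝ v z 1 + Complex.I • fderiv ℝ v z Complex.I) / 2

/-- `∂̄ u = f` in the sense of distributions. -/
def IsDistribDbarOf (u f : ℂ → ℂ) : Prop :=
  ∀ v : ℂ → ℂ, ContDiff ℝ (⊤ : ℕ∞) v → HasCompactSupport v →
    ∫ z, f z * v z = - ∫ z, u z * dbar v z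

/-- Closed axis-parallel rectangle with centre `a` and half-sides `s, t`. -/
def axisRect (a : ℂ) (s t : ℝ) : Set ℂ :=
  {w : ℂ | |w.re - a.re| ≤ s ∧ |w.im - a.im| ≤ t}


/-!
Comparing a disk with a disjoint tangent disk of the same radius shows that a doubling measure is
also reverse doubling: for a suitable `a`, dilating a disk by `2 ^ a` multiplies its measure by at
least `C`. Hence the disk about `z` of radius `R = 2 ^ (a * n) * ρ z` has measure at least `C ^ n`.
If `w` lies in it, doubling `n` times about `w` gives `1 ≤ μ (ball w (2 * R / 2 ^ n))`, that is,
`ρ w ≤ 2 * R / 2 ^ n`. A curve leaving this disk therefore has length at least `2 ^ n / 2` in the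
metric `|dz| / ρ`, so points at `pathDist` less than `2 ^ n / 2` from `z` stay in a disk of measure
at most `C ^ (a * n)`. Since the points of `Λ` carry disjoint disks of measure bounded below, there
are at most `K * B ^ n` of them at that distance, uniformly in `z`. Summing over dyadic shells
gives convergence as soon as `2 * B ≤ 2 ^ m`, and raising `m` by one gains a factor `r⁻¹` in the
tail.
-/

section Packing

theorem encard_le_mul_measure_of_pairwiseDisjoint {α ι : Type*} [MeasurableSpace α]
    {μ : Measure α} {s : Set ι} {B : ι → Set α} {A : Set α} {c : ℝ≥0∞}
    (hmeas : ∀ i ∈ s, MeasurableSet (B i)) (hdisj : s.PairwiseDisjoint B)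
    (hone : ∀ i ∈ s, 1 ≤ c * μ (B i)) (hsub : ∀ i ∈ s, B i ⊆ A) :
    (s.encard : ℝ≥0∞) ≤ c * μ A :=
  calc (s.encard : ℝ≥0∞) = ∑' _ : s, 1 := (ENNReal.tsum_set_one s).symm
    _ ≤ ∑' i : s, c * μ (B i) := ENNReal.tsum_le_tsum fun i => hone i i.2
    _ = c * ∑' i : s, μ (B i) := ENNReal.tsum_mul_left
    _ ≤ c * μ (⋃ i : s, B i) := by
      gcongr
      exact tsum_meas_le_meas_iUnion_of_disjoint μ (fun i => hmeas i i.2)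
        fun i j hij => hdisj i.2 j.2 (Subtype.coe_injective.ne hij)
    _ ≤ c * μ A := by
      gcongr
      exact iUnion_subset fun i => hsub i i.2

theorem exists_measure_ball_add_measure_ball_le {E : Type*} [NormedAddCommGroup E]
    [NormedSpace ℝ E] [Nontrivial E] [MeasurableSpace E] [OpensMeasurableSpace E]
    (μ : Measure E) (z : E) {r s : ℝ} (hr : 0 ≤ r) (hs : 0 ≤ s) :
    ∃ c, dist c z = r + s ∧ μ (ball z r) + μ (ball c s) ≤ μ (ball z (r + 2 * s)) := by
  obtain ⟨c, hc⟩ := (NormedSpace.sphere_nonempty (x := z)).2 (add_nonneg hr hs)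
  rw [mem_sphere] at hc
  refine ⟨c, hc, ?_⟩
  rw [← measure_union (ball_disjoint_ball (by rw [dist_comm, hc])) measurableSet_ball]
  exact measure_mono (union_subset (ball_subset_ball (by linarith))
    (ball_subset_ball' (by linarith)))

end Packing

section CurveLength

theorem exists_eq_and_forall_le_of_continuousOn {α δ : Type*} [ConditionallyCompleteLinearOrder α]
    [TopologicalSpace α] [OrderTopology α] [DenselyOrdered α] [LinearOrder δ] [TopologicalSpace δ]
    [OrderClosedTopology δ] {f : α → δ} {a b : α} {c : δ} (hab : a ≤ b)
    (hf : ContinuousOn f (Icc a b)) (ha : f a ≤ c) (hb : c ≤ f b) :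
    ∃ s ∈ Icc a b, f s = c ∧ ∀ t ∈ Icc a s, f t ≤ c := by
  have hcompact : IsCompact (Icc a b ∩ f ⁻¹' {c}) :=
    isCompact_Icc.of_isClosed_subset (hf.preimage_isClosed_of_isClosed isClosed_Icc
      isClosed_singleton) inter_subset_left
  obtain ⟨s, ⟨hs, hsc⟩, hmin⟩ :=
    hcompact.exists_isLeast (intermediate_value_Icc hab hf ⟨ha, hb⟩)
  refine ⟨s, hs, hsc, fun t ht => le_of_not_gt fun hct => ?_⟩
  have htb : t ≤ b := ht.2.trans hs.2
  obtain ⟨u, hu, huc⟩ :=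
    intermediate_value_Icc ht.1 (hf.mono (Icc_subset_Icc_right htb)) ⟨ha, hct.le⟩
  have htu : t = u := (ht.2.trans (hmin ⟨⟨hu.1, hu.2.trans htb⟩, huc⟩)).antisymm hu.2
  exact hct.ne' (htu ▸ huc)

variable {E : Type*} [NormedAddCommGroup E] [NormedSpace ℝ E] [CompleteSpace E]

theorem dist_le_integral_norm_deriv {γ : ℝ → E} (hγ : ContDiff ℝ 1 γ) {a b : ℝ} (hab : a ≤ b) :
    dist (γ b) (γ a) ≤ ∫ t in a..b, ‖deriv γ t‖ := by
  rw [dist_eq_norm, ← intervalIntegral.integral_deriv_eq_sub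
    (fun t _ => hγ.differentiable one_ne_zero t)
    ((hγ.continuous_deriv le_rfl).intervalIntegrable _ _)]
  exact intervalIntegral.norm_integral_le_integral_norm hab

theorem div_le_integral_norm_deriv_div {ρ : E → ℝ} (hρ : Continuous ρ) (hpos : ∀ x, 0 < ρ x)
    {γ : ℝ → E} (hγ : ContDiff ℝ 1 γ) {a b : ℝ} (hab : a ≤ b) {R T : ℝ} (hR : 0 ≤ R)
    (hT : ∀ x ∈ closedBall (γ a) R, ρ x ≤ T) (hdist : R ≤ dist (γ b) (γ a)) :
    R / T ≤ ∫ t in a..b, ‖deriv γ t‖ / ρ (γ t) := by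
  have hT₀ : 0 < T := (hpos _).trans_le (hT _ (mem_closedBall_self hR))
  have hderiv : Continuous fun t => ‖deriv γ t‖ := (hγ.continuous_deriv le_rfl).norm
  have hlen : Continuous fun t => ‖deriv γ t‖ / ρ (γ t) :=
    hderiv.div (hρ.comp hγ.continuous) fun t => (hpos _).ne'
  obtain ⟨s, hs, hexit, hinside⟩ := exists_eq_and_forall_le_of_continuousOn hab
    (hγ.continuous.dist continuous_const).continuousOn (by rwa [dist_self]) hdist
  calc R / T ≤ (∫ t in a..s, ‖deriv γ t‖) / T := by
        gcongr
        exact hexit.ge.trans (dist_le_integral_norm_deriv hγ hs.1)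
    _ = ∫ t in a..s, ‖deriv γ t‖ / T := (intervalIntegral.integral_div _ _).symm
    _ ≤ ∫ t in a..s, ‖deriv γ t‖ / ρ (γ t) :=
        intervalIntegral.integral_mono_on hs.1 ((hderiv.div_const T).intervalIntegrable _ _)
          (hlen.intervalIntegrable _ _) fun t ht =>
            div_le_div_of_nonneg_left (norm_nonneg _) (hpos _) (hT _ (hinside t ht))
    _ ≤ ∫ t in a..b, ‖deriv γ t‖ / ρ (γ t) :=
        intervalIntegral.integral_mono_interval le_rfl hs.1 hs.2
          (.of_forall fun t => div_nonneg (norm_nonneg _) (hpos _).le)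
          (hlen.intervalIntegrable _ _)

theorem div_le_pathDist {ρ : ℂ → ℝ} (hρ : Continuous ρ) (hpos : ∀ x, 0 < ρ x) {z w : ℂ}
    {R T : ℝ} (hR : 0 ≤ R) (hT : ∀ x ∈ closedBall z R, ρ x ≤ T) (hdist : R ≤ dist w z) :
    R / T ≤ pathDist ρ z w := by
  refine le_csInf ⟨_, AffineMap.lineMap z w, AffineMap.lineMap_apply_zero z w,
    AffineMap.lineMap_apply_one z w, AffineMap.contDiff_lineMap z w, rfl⟩ ?_
  rintro _ ⟨γ, rfl, rfl, hγ, rfl⟩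
  exact div_le_integral_norm_deriv_div hρ hpos hγ zero_le_one hR hT hdist

end CurveLength

section DyadicSums

theorem inv_one_add_pow_le_tsum_indicator (x : ℝ≥0) (m : ℕ) :
    (1 + (x : ℝ≥0∞) ^ m)⁻¹ ≤
      ∑' n : ℕ, 2 ^ m * ((2 ^ m)⁻¹ ^ n * (Iio (2 ^ n)).indicator 1 x) := by
  rcases lt_or_ge x 1 with hx | hx
  · refine le_trans ?_ (ENNReal.le_tsum 0)
    calc (1 + (x : ℝ≥0∞) ^ m)⁻¹ ≤ 1 := ENNReal.inv_le_one.2 le_self_add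
      _ ≤ 2 ^ m := one_le_pow₀ one_le_two
      _ = 2 ^ m * ((2 ^ m)⁻¹ ^ 0 * (Iio (2 ^ 0)).indicator 1 x) := by simp [hx]
  · obtain ⟨n, hn, hn'⟩ := exists_nat_pow_near hx one_lt_two
    refine le_trans ?_ (ENNReal.le_tsum (n + 1))
    have hpow : (2 ^ m : ℝ≥0∞) ^ n ≤ 1 + (x : ℝ≥0∞) ^ m :=
      calc (2 ^ m : ℝ≥0∞) ^ n = (2 ^ n) ^ m := pow_right_comm _ _ _
        _ ≤ (x : ℝ≥0∞) ^ m := by gcongr; exact_mod_cast hn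
        _ ≤ 1 + (x : ℝ≥0∞) ^ m := le_add_self
    calc (1 + (x : ℝ≥0∞) ^ m)⁻¹ ≤ (2 ^ m)⁻¹ ^ n := by rw [← ENNReal.inv_pow]; gcongr
      _ = 2 ^ m * (2 ^ m)⁻¹ ^ (n + 1) := by
        rw [pow_succ', ← mul_assoc, ENNReal.mul_inv_cancel (by simp) (by finiteness), one_mul]
      _ = 2 ^ m * ((2 ^ m)⁻¹ ^ (n + 1) * (Iio (2 ^ (n + 1))).indicator 1 x) := by simp [hn']

theorem tsum_inv_one_add_pow_le_of_encard_le {ι : Type*} {d : ι → ℝ≥0} {K B : ℝ≥0∞} {m : ℕ}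
    (hcount : ∀ n : ℕ, ({i | d i < 2 ^ n}.encard : ℝ≥0∞) ≤ K * B ^ n) (hm : 2 * B ≤ 2 ^ m) :
    ∑' i, (1 + (d i : ℝ≥0∞) ^ m)⁻¹ ≤ 2 ^ m * (2 * K) := by
  have hratio : (2 ^ m : ℝ≥0∞)⁻¹ * B ≤ 2⁻¹ := by
    rw [ENNReal.inv_mul_le_iff (by simp) (by finiteness), ← div_eq_mul_inv,
      ENNReal.le_div_iff_mul_le (by simp) (by simp), mul_comm]
    exact hm
  have hshell (n : ℕ) : ∑' i, (Iio (2 ^ n)).indicator (1 : ℝ≥0 → ℝ≥0∞) (d i) =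
      {i | d i < 2 ^ n}.encard := by
    rw [← ENNReal.tsum_set_one, tsum_subtype {i | d i < 2 ^ n} fun _ => (1 : ℝ≥0∞)]
    rfl
  calc ∑' i, (1 + (d i : ℝ≥0∞) ^ m)⁻¹
      ≤ ∑' i, ∑' n : ℕ, 2 ^ m * ((2 ^ m)⁻¹ ^ n * (Iio (2 ^ n)).indicator 1 (d i)) :=
        ENNReal.tsum_le_tsum fun i => inv_one_add_pow_le_tsum_indicator (d i) m
    _ = 2 ^ m * ∑' n : ℕ, (2 ^ m)⁻¹ ^ n * ({i | d i < 2 ^ n}.encard : ℝ≥0∞) := by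
        rw [ENNReal.tsum_comm]
        simp only [ENNReal.tsum_mul_left, hshell]
    _ ≤ 2 ^ m * ∑' n : ℕ, 2⁻¹ ^ n * K := by
        gcongr 2 ^ m * ∑' n : ℕ, ?_ with n
        calc (2 ^ m : ℝ≥0∞)⁻¹ ^ n * ({i | d i < 2 ^ n}.encard : ℝ≥0∞)
            ≤ (2 ^ m)⁻¹ ^ n * (K * B ^ n) := by gcongr; exact hcount n
          _ = ((2 ^ m)⁻¹ * B) ^ n * K := by ring
          _ ≤ 2⁻¹ ^ n * K := by gcongr
    _ = 2 ^ m * (2 * K) := by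
        rw [ENNReal.tsum_mul_right, ENNReal.tsum_geometric, ENNReal.one_sub_inv_two, inv_inv]

theorem inv_pow_succ_le {r x : ℝ≥0∞} (hr : 1 ≤ r) (hrx : r ≤ x) (m : ℕ) :
    (x ^ (m + 1))⁻¹ ≤ r⁻¹ * (2 * (1 + x ^ m)⁻¹) := by
  have hone : 1 ≤ x := hr.trans hrx
  have hhalf : (x ^ m)⁻¹ ≤ 2 * (1 + x ^ m)⁻¹ := by
    rw [← div_eq_mul_inv, ENNReal.le_div_iff_mul_le (by simp) (by simp)]
    calc (x ^ m)⁻¹ * (1 + x ^ m) ≤ (x ^ m)⁻¹ * (x ^ m + x ^ m) := by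
          gcongr
          exact one_le_pow₀ hone
      _ = 2 * ((x ^ m)⁻¹ * x ^ m) := by ring
      _ ≤ 2 := mul_le_of_le_one_right' (ENNReal.inv_mul_le_one _)
  calc (x ^ (m + 1))⁻¹ = x⁻¹ * (x ^ m)⁻¹ := by
        rw [ENNReal.inv_pow, pow_succ', ENNReal.inv_pow]
    _ ≤ r⁻¹ * (2 * (1 + x ^ m)⁻¹) := by gcongr

theorem tsum_inv_pow_succ_le {α : Type*} {d : α → ℝ≥0∞} {s t : Set α} {r : ℝ≥0∞} (hr : 1 ≤ r)
    (hst : s ⊆ t) (hs : ∀ i ∈ s, r ≤ d i) (m : ℕ) :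
    ∑' i : s, (d i ^ (m + 1))⁻¹ ≤ r⁻¹ * (2 * ∑' i : t, (1 + d i ^ m)⁻¹) :=
  calc ∑' i : s, (d i ^ (m + 1))⁻¹
      ≤ ∑' i : s, r⁻¹ * (2 * (1 + d i ^ m)⁻¹) :=
        ENNReal.tsum_le_tsum fun i => inv_pow_succ_le hr (hs i i.2) m
    _ = r⁻¹ * (2 * ∑' i : s, (1 + d i ^ m)⁻¹) := by simp only [ENNReal.tsum_mul_left]
    _ ≤ r⁻¹ * (2 * ∑' i : t, (1 + d i ^ m)⁻¹) := by
        gcongr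
        exact ENNReal.tsum_mono_subtype (fun i => (1 + d i ^ m)⁻¹) hst

theorem tendsto_iSup_tsum_inv_pow_succ_atTop {α β : Type*} {d : β → α → ℝ} {Λ : Set α} {m : ℕ}
    (hfin : ⨆ z, ∑' l : Λ, (1 + ENNReal.ofReal (d z l) ^ m)⁻¹ ≠ ∞) :
    Tendsto (fun r : ℝ => ⨆ z, ∑' l : {w // w ∈ Λ ∧ r ≤ d z w},
      (ENNReal.ofReal (d z l) ^ (m + 1))⁻¹) atTop (𝓝 0) := by
  set X := ⨆ z, ∑' l : Λ, (1 + ENNReal.ofReal (d z l) ^ m)⁻¹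
  have hlim : Tendsto (fun r : ℝ => (ENNReal.ofReal r)⁻¹ * (2 * X)) atTop (𝓝 0) := by
    simpa using ENNReal.Tendsto.mul_const ENNReal.tendsto_ofReal_atTop.inv
      (.inr (by finiteness : 2 * X ≠ ∞))
  refine tendsto_of_tendsto_of_tendsto_of_le_of_le' tendsto_const_nhds hlim
    (.of_forall fun _ => zero_le) ?_
  filter_upwards [eventually_ge_atTop 1] with r hr
  refine iSup_le fun z => ?_
  calc ∑' l : {w // w ∈ Λ ∧ r ≤ d z w}, (ENNReal.ofReal (d z l) ^ (m + 1))⁻¹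
      ≤ (ENNReal.ofReal r)⁻¹ * (2 * ∑' l : Λ, (1 + ENNReal.ofReal (d z l) ^ m)⁻¹) :=
        tsum_inv_pow_succ_le (d := fun w => ENNReal.ofReal (d z w))
          (s := {w | w ∈ Λ ∧ r ≤ d z w}) (ENNReal.one_le_ofReal.2 hr) (fun _ h => h.1)
          (fun _ h => ENNReal.ofReal_le_ofReal h.2) m
    _ ≤ (ENNReal.ofReal r)⁻¹ * (2 * X) := by
        gcongr
        exact le_iSup (fun z => ∑' l : Λ, (1 + ENNReal.ofReal (d z l) ^ m)⁻¹) z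

end DyadicSums

theorem pow_mul_le_apply_pow_mul {M : Type*} [Monoid M] [Preorder M] [MulLeftMono M]
    {f : ℝ → M} {κ : M} {b : ℝ} (hb : 0 < b) (hf : ∀ r, 0 < r → κ * f r ≤ f (b * r))
    (n : ℕ) {r : ℝ} (hr : 0 < r) :
    κ ^ n * f r ≤ f (b ^ n * r) := by
  induction n with
  | zero => simp
  | succ n ih =>
    calc κ ^ (n + 1) * f r = κ * (κ ^ n * f r) := by rw [pow_succ', mul_assoc]
      _ ≤ κ * f (b ^ n * r) := by gcongr
      _ ≤ f (b * (b ^ n * r)) := hf _ (by positivity)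
      _ = f (b ^ (n + 1) * r) := by rw [pow_succ', mul_assoc]

namespace IsDoubling

variable {μ : Measure ℂ} {C : ℝ≥0} (hμ : IsDoubling μ C)
include hμ

theorem measure_ball_two_pow_mul_le (z : ℂ) (n : ℕ) {r : ℝ} (hr : 0 < r) :
    μ (ball z (2 ^ n * r)) ≤ C ^ n * μ (ball z r) := by
  induction n with
  | zero => simp
  | succ n ih =>
    calc μ (ball z (2 ^ (n + 1) * r)) = μ (ball z (2 * (2 ^ n * r))) := by
          rw [pow_succ', mul_assoc]
      _ ≤ C * μ (ball z (2 ^ n * r)) := hμ z _ (by positivity)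
      _ ≤ C * (C ^ n * μ (ball z r)) := by gcongr
      _ = C ^ (n + 1) * μ (ball z r) := by rw [pow_succ', mul_assoc]

theorem measure_ball_pos (hμ₀ : μ ≠ 0) (z : ℂ) {r : ℝ} (hr : 0 < r) : 0 < μ (ball z r) := by
  refine pos_iff_ne_zero.2 fun hzero => hμ₀ (Measure.measure_univ_eq_zero.1 ?_)
  have hnull (n : ℕ) : μ (ball z (2 ^ n * r)) = 0 := by
    simpa [hzero] using hμ.measure_ball_two_pow_mul_le z n hr
  refine measure_mono_null (fun w _ => ?_) (measure_iUnion_null hnull)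
  obtain ⟨n, hn⟩ := pow_unbounded_of_one_lt (dist w z / r) (one_lt_two (α := ℝ))
  exact mem_iUnion.2 ⟨n, mem_ball.2 ((div_lt_iff₀ hr).1 hn)⟩

theorem one_add_inv_sq_mul_measure_ball_le (z : ℂ) {r : ℝ} (hr : 0 < r) :
    (1 + (C ^ 2)⁻¹ : ℝ≥0) * μ (ball z r) ≤ μ (ball z (4 * r)) := by
  obtain ⟨c, hc, hadd⟩ := exists_measure_ball_add_measure_ball_le μ z hr.le hr.le
  have hcompare : ((C ^ 2)⁻¹ : ℝ≥0) * μ (ball z r) ≤ μ (ball c r) :=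
    calc ((C ^ 2)⁻¹ : ℝ≥0) * μ (ball z r)
        ≤ ((C ^ 2)⁻¹ : ℝ≥0) * μ (ball c (2 ^ 2 * r)) := by
          gcongr
          exact ball_subset_ball' (by rw [dist_comm, hc]; linarith)
      _ ≤ ((C ^ 2)⁻¹ : ℝ≥0) * (C ^ 2 * μ (ball c r)) := by
          gcongr
          exact hμ.measure_ball_two_pow_mul_le c 2 hr
      _ = ((C ^ 2)⁻¹ * C ^ 2 : ℝ≥0) * μ (ball c r) := by push_cast; rw [mul_assoc]
      _ ≤ μ (ball c r) := mul_le_of_le_one_left' (by exact_mod_cast inv_mul_le_one)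
  calc (1 + (C ^ 2)⁻¹ : ℝ≥0) * μ (ball z r)
      = μ (ball z r) + ((C ^ 2)⁻¹ : ℝ≥0) * μ (ball z r) := by
        rw [ENNReal.coe_add, ENNReal.coe_one, add_mul, one_mul]
    _ ≤ μ (ball z r) + μ (ball c r) := by gcongr
    _ ≤ μ (ball z (r + 2 * r)) := hadd
    _ ≤ μ (ball z (4 * r)) := measure_mono (ball_subset_ball (by linarith))

theorem exists_mul_measure_ball_le_measure_ball_two_pow_mul :
    ∃ a : ℕ, ∀ (z : ℂ) (r : ℝ), 0 < r → C * μ (ball z r) ≤ μ (ball z (2 ^ a * r)) := by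
  rcases eq_or_ne C 0 with rfl | hC
  · exact ⟨0, by simp⟩
  obtain ⟨N, hN⟩ := pow_unbounded_of_one_lt C
    (lt_add_of_pos_right 1 (inv_pos.2 (pow_pos (pos_iff_ne_zero.2 hC) 2)))
  refine ⟨2 * N, fun z r hr => ?_⟩
  calc C * μ (ball z r) ≤ ((1 + (C ^ 2)⁻¹ : ℝ≥0) : ℝ≥0∞) ^ N * μ (ball z r) := by
        gcongr
        exact_mod_cast hN.le
    _ ≤ μ (ball z (4 ^ N * r)) := pow_mul_le_apply_pow_mul four_pos
        (fun _ => hμ.one_add_inv_sq_mul_measure_ball_le z) N hr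
    _ = μ (ball z (2 ^ (2 * N) * r)) := by norm_num [pow_mul]

end IsDoubling

namespace IsRadius

variable {μ : Measure ℂ} {C : ℝ≥0} {ρ : ℂ → ℝ} (hρ : IsRadius μ ρ)
include hρ

theorem measure_ne_zero : μ ≠ 0 := by
  rintro rfl
  simpa using (hρ 0).2

variable (hμ : IsDoubling μ C)
include hμ

theorem doublingConst_ne_zero : C ≠ 0 := by
  rintro rfl
  have hpos := hμ.measure_ball_pos hρ.measure_ne_zero 0 (mul_pos two_pos (hρ 0).1)
  exact hpos.not_ge (by simpa using hμ 0 (ρ 0) (hρ 0).1)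

theorem radius_le_of_one_le_measure_ball {z : ℂ} {r : ℝ} (h : 1 ≤ μ (ball z r)) : ρ z ≤ r := by
  by_contra! hlt
  have hr : 0 < r := nonempty_ball.1 (nonempty_of_measure_ne_zero (zero_lt_one.trans_le h).ne')
  obtain ⟨c, -, hadd⟩ := exists_measure_ball_add_measure_ball_le μ z hr.le
    (s := (ρ z - r) / 2) (by linarith)
  rw [mul_div_cancel₀ _ two_ne_zero, add_sub_cancel, (hρ z).2] at hadd
  have hc : 0 < μ (ball c ((ρ z - r) / 2)) :=
    hμ.measure_ball_pos hρ.measure_ne_zero c (by linarith)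
  exact hadd.not_gt ((ENNReal.lt_add_right ENNReal.one_ne_top hc.ne').trans_le (by gcongr))

theorem lipschitzWith_radius : LipschitzWith 1 ρ :=
  LipschitzWith.of_le_add fun w z => hρ.radius_le_of_one_le_measure_ball hμ <|
    (hρ z).2.symm.trans_le (measure_mono (ball_subset_ball' (by rw [dist_comm])))

theorem exists_radius_le_div_two_pow :
    ∃ a : ℕ, ∀ (z : ℂ) (n : ℕ), ∀ w ∈ closedBall z (2 ^ (a * (n + 1)) * ρ z),
      ρ w ≤ 2 ^ (a * (n + 1)) * ρ z / 2 ^ n := by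
  obtain ⟨a, ha⟩ := hμ.exists_mul_measure_ball_le_measure_ball_two_pow_mul
  refine ⟨a, fun z n w hw => ?_⟩
  set R : ℝ := 2 ^ (a * (n + 1)) * ρ z with hR
  have hR₀ : 0 < R := mul_pos (by positivity) (hρ z).1
  have hgrowth : (C : ℝ≥0∞) ^ (n + 1) ≤ μ (ball z R) := by
    simpa [(hρ z).2, hR, pow_mul] using
      pow_mul_le_apply_pow_mul (by positivity) (ha z) (n + 1) (hρ z).1
  have hsub : ball z R ⊆ ball w (2 ^ (n + 1) * (R / 2 ^ n)) := by
    refine ball_subset_ball' ?_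
    rw [pow_succ', mul_assoc, mul_div_cancel₀ _ (by positivity), dist_comm]
    linarith [mem_closedBall.1 hw]
  have hmul : (C : ℝ≥0∞) ^ (n + 1) * 1 ≤ C ^ (n + 1) * μ (ball w (R / 2 ^ n)) := by
    rw [mul_one]
    exact hgrowth.trans <| (measure_mono hsub).trans <|
      hμ.measure_ball_two_pow_mul_le w (n + 1) (by positivity)
  have hC : (C : ℝ≥0∞) ≠ 0 := ENNReal.coe_ne_zero.2 (hρ.doublingConst_ne_zero hμ)
  exact hρ.radius_le_of_one_le_measure_ball hμ <|
    (ENNReal.mul_le_mul_iff_right (pow_ne_zero _ hC) (by finiteness)).1 hmul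

theorem exists_dist_lt_of_pathDist_lt :
    ∃ a : ℕ, ∀ (z w : ℂ) (n : ℕ), pathDist ρ z w < 2 ^ n →
      dist w z < 2 ^ (a * (n + 1)) * ρ z := by
  obtain ⟨a, ha⟩ := hρ.exists_radius_le_div_two_pow hμ
  refine ⟨a, fun z w n hlt => lt_of_not_ge fun hfar => hlt.not_ge ?_⟩
  have hR : 0 < 2 ^ (a * (n + 1)) * ρ z := mul_pos (by positivity) (hρ z).1
  calc (2 : ℝ) ^ n
      = 2 ^ (a * (n + 1)) * ρ z / (2 ^ (a * (n + 1)) * ρ z / 2 ^ n) :=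
        (div_div_cancel₀ hR.ne').symm
    _ ≤ pathDist ρ z w := div_le_pathDist (hρ.lipschitzWith_radius hμ).continuous
        (fun x => (hρ x).1) hR.le (ha z n) hfar

end IsRadius

namespace RhoSeparated

variable {ρ : ℂ → ℝ} {Λ : Set ℂ} (hΛ : RhoSeparated ρ Λ)
include hΛ

theorem exists_pairwiseDisjoint_ball (hρ : ∀ z, 0 ≤ ρ z) :
    ∃ p : ℕ, Λ.PairwiseDisjoint fun l => ball l (ρ l / 2 ^ p) := by
  obtain ⟨δ, hδ, hsep⟩ := hΛ
  obtain ⟨p, hp⟩ := pow_unbounded_of_one_lt (2 / δ) (one_lt_two (α := ℝ))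
  refine ⟨p, fun l hl l' hl' hne => ball_disjoint_ball (le_trans ?_ (hsep l hl l' hl' hne))⟩
  rw [div_lt_iff₀ hδ] at hp
  rw [← add_div, div_le_iff₀ (by positivity)]
  calc ρ l + ρ l' ≤ 2 * max (ρ l) (ρ l') := by
        linarith [le_max_left (ρ l) (ρ l'), le_max_right (ρ l) (ρ l')]
    _ ≤ 2 ^ p * δ * max (ρ l) (ρ l') := by
        gcongr
        exact (hρ l).trans (le_max_left _ _)
    _ = δ * max (ρ l) (ρ l') * 2 ^ p := by ring

variable {μ : Measure ℂ} {C : ℝ≥0} (hμ : IsDoubling μ C) (hρ : IsRadius μ ρ)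
include hμ hρ

theorem exists_encard_inter_closedBall_le :
    ∃ q : ℕ, ∀ (z : ℂ) (M : ℕ),
      ((Λ ∩ closedBall z (2 ^ M * ρ z)).encard : ℝ≥0∞) ≤ C ^ (q + M) := by
  obtain ⟨p, hdisj⟩ := hΛ.exists_pairwiseDisjoint_ball fun z => (hρ z).1.le
  refine ⟨p + 2, fun z M => ?_⟩
  have hmass (l : ℂ) : 1 ≤ C ^ p * μ (ball l (ρ l / 2 ^ p)) := by
    simpa [mul_div_cancel₀, (hρ l).2] using
      hμ.measure_ball_two_pow_mul_le l p (div_pos (hρ l).1 (by positivity : (0 : ℝ) < 2 ^ p))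
  have hsub : ∀ l ∈ Λ ∩ closedBall z (2 ^ M * ρ z),
      ball l (ρ l / 2 ^ p) ⊆ ball z (2 ^ (M + 2) * ρ z) := by
    rintro l ⟨-, hl⟩
    have hlip : ρ l ≤ ρ z + dist l z := by
      simpa using (hρ.lipschitzWith_radius hμ).le_add_mul l z
    have hshrink : ρ l / 2 ^ p ≤ ρ l := div_le_self (hρ l).1.le (one_le_pow₀ one_le_two)
    have hradius : ρ z ≤ 2 ^ M * ρ z :=
      le_mul_of_one_le_left (hρ z).1.le (one_le_pow₀ one_le_two)
    refine ball_subset_ball' ?_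
    rw [pow_add]
    linarith [mem_closedBall.1 hl, (hρ z).1]
  calc ((Λ ∩ closedBall z (2 ^ M * ρ z)).encard : ℝ≥0∞)
      ≤ C ^ p * μ (ball z (2 ^ (M + 2) * ρ z)) :=
        encard_le_mul_measure_of_pairwiseDisjoint (fun _ _ => measurableSet_ball)
          (hdisj.subset inter_subset_left) (fun l _ => hmass l) hsub
    _ ≤ C ^ p * (C ^ (M + 2) * μ (ball z (ρ z))) := by
        gcongr
        exact hμ.measure_ball_two_pow_mul_le z (M + 2) (hρ z).1
    _ = C ^ (p + 2 + M) := by rw [(hρ z).2]; ring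

theorem exists_encard_pathDist_lt_le :
    ∃ K B : ℝ≥0, ∀ (z : ℂ) (n : ℕ),
      ({l : Λ | pathDist ρ z l < 2 ^ n}.encard : ℝ≥0∞) ≤ K * B ^ n := by
  obtain ⟨a, ha⟩ := hρ.exists_dist_lt_of_pathDist_lt hμ
  obtain ⟨q, hq⟩ := hΛ.exists_encard_inter_closedBall_le hμ hρ
  refine ⟨C ^ (q + a), C ^ a, fun z n => ?_⟩
  have hsub : Subtype.val '' {l : Λ | pathDist ρ z l < 2 ^ n} ⊆
      Λ ∩ closedBall z (2 ^ (a * (n + 1)) * ρ z) := by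
    rintro _ ⟨l, hl, rfl⟩
    exact ⟨l.2, (ha z l n hl).le⟩
  calc ({l : Λ | pathDist ρ z l < 2 ^ n}.encard : ℝ≥0∞)
      ≤ ((Λ ∩ closedBall z (2 ^ (a * (n + 1)) * ρ z)).encard : ℝ≥0∞) := by
        rw [← Subtype.val_injective.encard_image]
        exact_mod_cast encard_le_encard hsub
    _ ≤ C ^ (q + a * (n + 1)) := hq z _
    _ = (C ^ (q + a) : ℝ≥0) * (C ^ a : ℝ≥0) ^ n := by push_cast; ring

theorem exists_forall_iSup_tsum_inv_one_add_pathDist_pow_lt_top :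
    ∃ m₀ : ℕ, ∀ m ≥ m₀,
      ⨆ z : ℂ, ∑' l : Λ, (1 + ENNReal.ofReal (pathDist ρ z l) ^ m)⁻¹ < ∞ := by
  obtain ⟨K, B, hcount⟩ := hΛ.exists_encard_pathDist_lt_le hμ hρ
  obtain ⟨m₀, hm₀⟩ := pow_unbounded_of_one_lt (2 * B) one_lt_two
  refine ⟨m₀, fun m hm => ?_⟩
  have hB : (2 * B : ℝ≥0∞) ≤ 2 ^ m := by
    exact_mod_cast hm₀.le.trans (pow_le_pow_right₀ one_le_two hm)
  have hcount' (z : ℂ) (n : ℕ) :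
      ({l : Λ | (pathDist ρ z l).toNNReal < 2 ^ n}.encard : ℝ≥0∞) ≤ K * B ^ n := by
    have hlt (x : ℝ) : x.toNNReal < 2 ^ n ↔ x < 2 ^ n := by
      exact_mod_cast Real.toNNReal_lt_natCast (pow_ne_zero n two_ne_zero)
    simpa only [hlt] using hcount z n
  exact (iSup_le fun z => tsum_inv_one_add_pow_le_of_encard_le (hcount' z) hB).trans_lt
    (by finiteness)

end RhoSeparated

theorem separated_sums_general {μ : Measure ℂ} {C : ℝ≥0} (hμ : IsDoubling μ C)
    {ρ : ℂ → ℝ} (hρ : IsRadius μ ρ) {Λ : Set ℂ} (hΛ : RhoSeparated ρ Λ) :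
    ∃ m : ℕ,
      (⨆ z : ℂ, ∑' l : Λ, (1 + ENNReal.ofReal (pathDist ρ z l.1) ^ m)⁻¹) < ∞ ∧
      Tendsto
        (fun r : ℝ => ⨆ z : ℂ,
          ∑' l : {w : ℂ // w ∈ Λ ∧ r ≤ pathDist ρ z w},
            (ENNReal.ofReal (pathDist ρ z l.1) ^ m)⁻¹)
        atTop (𝓝 0) := by
  obtain ⟨m, hm⟩ := hΛ.exists_forall_iSup_tsum_inv_one_add_pathDist_pow_lt_top hμ hρ
  exact ⟨m + 1, hm (m + 1) m.le_succ, tendsto_iSup_tsum_inv_pow_succ_atTop (hm m le_rfl).ne⟩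

/-- For a `ρ`-separated sequence `Λ` there is `m ∈ ℕ` with
`sup_z Σ_{λ∈Λ} (1 + d_φ(z,λ)^m)⁻¹ < ∞`, and moreover the tails
`sup_z Σ_{d_φ(z,λ) ≥ r} d_φ(z,λ)^{-m}` tend to `0` as `r → ∞`. -/
theorem separated_sums
    (φ : ℂ → ℝ) (μ : Measure ℂ) (hφ : HasDoublingLaplacian φ μ)
    (ρ : ℂ → ℝ) (hρ : IsRadius μ ρ)
    (Λ : Set ℂ) (hΛ : RhoSeparated ρ Λ) :
    ∃ m : ℕ,
      (⨆ z : ℂ, ∑' l : Λ, (1 + ENNReal.ofReal (pathDist ρ z l.1) ^ m)⁻¹) < ∞ ∧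
      Tendsto
        (fun r : ℝ => ⨆ z : ℂ,
          ∑' l : {w : ℂ // w ∈ Λ ∧ r ≤ pathDist ρ z w},
            (ENNReal.ofReal (pathDist ρ z l.1) ^ m)⁻¹)
        atTop (𝓝 0) := by
  obtain ⟨_, -, hμ⟩ := hφ.doubling
  exact separated_sums_general hμ hρ hΛ

end
end

section
/- Let μ be a doubling measure on ℂ. For z ∈ ℂ define the measure ν_z on ℝ⁺ by ν_z(A) = μ({ζ = z + re^{iθ} : r ∈ A}) for Borel A ⊂ ℝ⁺ (the radial projection of μ centred at z). Then ν_z is a doubling measure on ℝ⁺, and there is a constant K, independent of z, such that the doubling constant of ν_z is at most K times the doubling constant of μ. -/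
/-!
The preimage under `ζ ↦ ‖ζ - z‖` of the interval of radius `r` around `x ≥ 0` is the
`r`-neighbourhood of the sphere `‖ζ - z‖ = x`, so the claim is an instance of a fact about any set
`S` in a separable space: a maximal `2r`-separated subset of `S` yields disjoint balls of radius `r`
inside the `r`-neighbourhood of `S`, and the concentric balls of radius `4r` cover the
`2r`-neighbourhood. Doubling twice on each ball and summing gives the constant `C²`.
-/

open MeasureTheory Metric Filter Set
open scoped ENNReal NNReal Real Topology Classical

noncomputable section

theorem exists_isSeparated_isCover {X : Type*} [PseudoEMetricSpace X] (ε : ℝ≥0) (s : Set X) :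
    ∃ N ⊆ s, IsSeparated ε N ∧ IsCover ε s N := by
  obtain ⟨N, hN⟩ := zorn_subset {N | N ⊆ s ∧ IsSeparated ε N} fun c hc hchain ↦
    ⟨⋃₀ c, ⟨sUnion_subset fun N hN ↦ (hc hN).1,
      (pairwise_sUnion hchain.directedOn).2 fun N hN ↦ (hc hN).2⟩,
      fun _ ↦ subset_sUnion_of_mem⟩
  exact ⟨N, hN.prop.1, hN.prop.2, .of_maximal_isSeparated hN⟩

section Metric

variable {X : Type*} [PseudoMetricSpace X]

theorem pairwiseDisjoint_ball_of_isSeparated {r : ℝ≥0} {N : Set X}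
    (hN : IsSeparated (2 * r : ℝ≥0) N) : N.PairwiseDisjoint fun p ↦ ball p (r : ℝ) := by
  intro p hp q hq hpq
  have hdist : 2 * (r : ℝ) < dist p q := by
    have h : ((2 * r : ℝ≥0) : ℝ≥0∞) < edist p q := hN hp hq hpq
    rw [edist_nndist] at h
    exact_mod_cast h
  exact ball_disjoint_ball (by linarith)

theorem thickening_subset_thickening_add_of_isCover {ε : ℝ≥0} {s N : Set X}
    (h : IsCover ε s N) (δ : ℝ) : thickening δ s ⊆ thickening (δ + ε) N := by
  intro x hx
  obtain ⟨y, hy, hxy⟩ := mem_thickening_iff.1 hx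
  obtain ⟨p, hp, hyp⟩ := mem_iUnion₂.1 (h.subset_iUnion_closedBall hy)
  exact mem_thickening_iff.2
    ⟨p, hp, (dist_triangle x y p).trans_lt (add_lt_add_of_lt_of_le hxy hyp)⟩

variable [MeasurableSpace X]

/-- `μ` is doubling on the open balls of a metric space, with constant `C`. On `ℂ` this unfolds to
`IsDoubling μ C`. -/
def IsBallDoubling (μ : Measure X) (C : ℝ≥0) : Prop :=
  ∀ (p : X) (r : ℝ), 0 < r → μ (ball p (2 * r)) ≤ C * μ (ball p r)

namespace IsBallDoubling

variable {μ : Measure X} {C : ℝ≥0}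

theorem measure_ball_four_mul_le (hμ : IsBallDoubling μ C) (p : X) {r : ℝ} (hr : 0 < r) :
    μ (ball p (4 * r)) ≤ C ^ 2 * μ (ball p r) :=
  calc μ (ball p (4 * r)) = μ (ball p (2 * (2 * r))) := by ring_nf
    _ ≤ C * μ (ball p (2 * r)) := hμ p (2 * r) (by positivity)
    _ ≤ C * (C * μ (ball p r)) := by gcongr; exact hμ p r hr
    _ = C ^ 2 * μ (ball p r) := by ring

variable [TopologicalSpace.SeparableSpace X] [OpensMeasurableSpace X]

theorem measure_thickening_four_mul_le_of_isSeparated (hμ : IsBallDoubling μ C) {r : ℝ≥0}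
    (hr : 0 < r) {N : Set X} (hN : IsSeparated (2 * r : ℝ≥0) N) :
    μ (thickening (4 * r) N) ≤ C ^ 2 * μ (thickening r N) := by
  have hdisj := pairwiseDisjoint_ball_of_isSeparated hN
  have hcount : N.Countable :=
    hdisj.countable_of_isOpen (fun _ _ ↦ isOpen_ball) fun _ _ ↦ nonempty_ball.2 hr
  simp only [thickening_eq_biUnion_ball]
  calc μ (⋃ p ∈ N, ball p (4 * r))
      ≤ ∑' p : N, μ (ball (p : X) (4 * r)) := measure_biUnion_le μ hcount _
    _ ≤ ∑' p : N, C ^ 2 * μ (ball (p : X) r) :=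
        ENNReal.tsum_le_tsum fun p ↦ hμ.measure_ball_four_mul_le p hr
    _ = C ^ 2 * ∑' p : N, μ (ball (p : X) r) := ENNReal.tsum_mul_left
    _ = C ^ 2 * μ (⋃ p ∈ N, ball p r) := by
        rw [measure_biUnion hcount hdisj fun _ _ ↦ measurableSet_ball]

theorem measure_thickening_two_mul_le (hμ : IsBallDoubling μ C) (s : Set X) {r : ℝ}
    (hr : 0 < r) : μ (thickening (2 * r) s) ≤ C ^ 2 * μ (thickening r s) := by
  lift r to ℝ≥0 using hr.le
  obtain ⟨N, hNs, hsep, hcov⟩ := exists_isSeparated_isCover (2 * r) s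
  have hcov' : thickening (2 * r) s ⊆ thickening (4 * r) N := by
    convert thickening_subset_thickening_add_of_isCover hcov (2 * r) using 2
    push_cast
    ring
  calc μ (thickening (2 * r) s) ≤ μ (thickening (4 * r) N) := measure_mono hcov'
    _ ≤ C ^ 2 * μ (thickening r N) :=
        hμ.measure_thickening_four_mul_le_of_isSeparated (by exact_mod_cast hr) hsep
    _ ≤ C ^ 2 * μ (thickening r s) := by
        gcongr
        exact thickening_subset_of_subset r hNs

end IsBallDoubling

end Metric

section Normed

variable {E : Type*} [NormedAddCommGroup E] [NormedSpace ℝ E] [Nontrivial E]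

theorem exists_mem_sphere_dist_eq (z w : E) {x : ℝ} (hx : 0 ≤ x) :
    ∃ p ∈ sphere z x, dist w p = |‖w - z‖ - x| := by
  obtain ⟨v, hv, hray⟩ : ∃ v : E, ‖v‖ = x ∧ SameRay ℝ (w - z) v := by
    rcases eq_or_ne (w - z) 0 with h | h
    · obtain ⟨v, hv⟩ := exists_norm_eq E hx
      exact ⟨v, hv, h ▸ .zero_left v⟩
    · exact ⟨(x * ‖w - z‖⁻¹) • (w - z), by simp [norm_smul, abs_of_nonneg hx, h],
        .sameRay_nonneg_smul_right _ (by positivity)⟩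
  refine ⟨z + v, by simp [hv], ?_⟩
  rw [dist_eq_norm, ← sub_sub, hray.norm_sub, hv]

theorem thickening_sphere (z : E) {x : ℝ} (hx : 0 ≤ x) (r : ℝ) :
    thickening r (sphere z x) = {w | |‖w - z‖ - x| < r} := by
  ext w
  refine mem_thickening_iff.trans ⟨?_, fun hw ↦ ?_⟩
  · rintro ⟨p, hp, hwp⟩
    change |‖w - z‖ - x| < r
    rw [← mem_sphere.1 hp, ← dist_eq_norm]
    exact (abs_dist_sub_le w p z).trans_lt hwp
  · obtain ⟨p, hp, hwp⟩ := exists_mem_sphere_dist_eq z w hx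
    exact ⟨p, hp, hwp.trans_lt hw⟩

variable [MeasurableSpace E] [OpensMeasurableSpace E]

theorem map_norm_sub_Ioo_inter_Ici (μ : Measure E) (z : E) {x : ℝ} (hx : 0 ≤ x) (r : ℝ) :
    μ.map (fun w ↦ ‖w - z‖) (Ioo (x - r) (x + r) ∩ Ici 0) = μ (thickening r (sphere z x)) := by
  have hmeas : Measurable fun w : E ↦ ‖w - z‖ :=
    (continuous_id.sub continuous_const).norm.measurable
  rw [Measure.map_apply hmeas (measurableSet_Ioo.inter measurableSet_Ici), thickening_sphere z hx]
  congr 1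
  ext w
  simp [abs_lt, sub_lt_iff_lt_add', lt_sub_iff_add_lt, neg_add_eq_sub]

theorem radial_projection_doubling_general [TopologicalSpace.SeparableSpace E]
    {μ : Measure E} {C : ℝ≥0} (hμ : IsBallDoubling μ C) (z : E) {x r : ℝ}
    (hx : 0 ≤ x) (hr : 0 < r) :
    μ.map (fun w ↦ ‖w - z‖) (Ioo (x - 2 * r) (x + 2 * r) ∩ Ici 0) ≤
      C ^ 2 * μ.map (fun w ↦ ‖w - z‖) (Ioo (x - r) (x + r) ∩ Ici 0) := by
  simpa only [map_norm_sub_Ioo_inter_Ici μ z hx] using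
    hμ.measure_thickening_two_mul_le (sphere z x) hr

end Normed

/-- The radial projection `ν_z` of a doubling measure `μ` centred at `z` is doubling on
`ℝ⁺`, with doubling constant at most `K · C_μ` for a `K` independent of `z`. -/
theorem radial_projection_doubling
    (μ : Measure ℂ) (Cd : ℝ≥0) (hCd : 0 < Cd) (hd : IsDoubling μ Cd) :
    ∃ K : ℝ≥0, 0 < K ∧ ∀ z : ℂ, ∀ x r : ℝ, 0 ≤ x → 0 < r →
      Measure.map (fun ζ : ℂ => ‖ζ - z‖) μ
          (Ioo (x - 2 * r) (x + 2 * r) ∩ Ici 0) ≤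
        (K * Cd : ℝ≥0) *
          Measure.map (fun ζ : ℂ => ‖ζ - z‖) μ
            (Ioo (x - r) (x + r) ∩ Ici 0) := by
  refine ⟨Cd, hCd, fun z x r hx hr ↦ ?_⟩
  simpa only [sq, ENNReal.coe_mul] using radial_projection_doubling_general hd z hx hr

end
end

section
/- Let μ be a doubling measure on ℂ, not identically zero, ρ the associated radius function, and D^r(z) = D(z, rρ(z)). Let ε(r) be a positive function with ε(r)/r → 0 as r → ∞. Then μ(D^{r+ε(r)}(z))/μ(D^r(z)) → 1 and μ(D^{r−ε(r)}(z))/μ(D^r(z)) → 1 as r → ∞, uniformly in z ∈ ℂ. -/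
open MeasureTheory Metric Filter Set
open scoped ENNReal NNReal Real Topology Classical

noncomputable section

/-!
Push the outer annulus `{R - s ≤ dist · z < R}` inwards by `2 * s`: at distance `2 * s` from each
of its points is the centre of a ball of radius `s` lying in the next annulus
`{R - 4 * s ≤ dist · z < R - s}`. By the Vitali covering theorem and doubling, the outer annulus
has at most `C ^ 3` times the mass of the next one, so shrinking the width of an annulus by a
factor `4` multiplies its mass by at most `C ^ 3 / (1 + C ^ 3) < 1`. Iterating, thin annuli carry a
small proportion of the mass of the ball, uniformly in its centre and radius.
-/

/-- Metric convexity: between two points there is a point at every intermediate distance (for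
complete spaces this is Menger convexity). It is the part of the geometry of a normed (or geodesic)
space that moves annuli inwards. -/
class IsMetricallyConvex (X : Type*) [PseudoMetricSpace X] : Prop where
  exists_dist_eq : ∀ x z : X, ∀ t ∈ Icc 0 (dist x z), ∃ y, dist x y = t ∧ dist y z = dist x z - t

instance {E : Type*} [SeminormedAddCommGroup E] [NormedSpace ℝ E] : IsMetricallyConvex E where
  exists_dist_eq x z t := by
    rintro ⟨ht₀, ht⟩
    rcases (ht₀.trans ht).eq_or_lt with hxz | hxz
    · exact ⟨x, by rw [dist_self]; linarith, by linarith⟩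
    · refine ⟨AffineMap.lineMap x z (t / dist x z), ?_, ?_⟩
      · rw [dist_left_lineMap, Real.norm_of_nonneg (by positivity), div_mul_cancel₀ _ hxz.ne']
      · have hle : t / dist x z ≤ 1 := (div_le_one hxz).2 ht
        rw [dist_lineMap_right, Real.norm_of_nonneg (sub_nonneg.2 hle), sub_mul, one_mul,
          div_mul_cancel₀ _ hxz.ne']

/-- The doubling condition `IsDoubling` for a measure on an arbitrary metric space. -/
def IsDoublingWith {X : Type*} [PseudoMetricSpace X] [MeasurableSpace X]
    (μ : Measure X) (C : ℝ≥0) : Prop :=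
  ∀ z : X, ∀ r : ℝ, 0 < r → μ (ball z (2 * r)) ≤ C * μ (ball z r)

lemma le_div_one_add_mul_add_of_le_mul {K a b : ℝ≥0∞} (hK : K ≠ ∞) (h : a ≤ K * b) :
    a ≤ K / (1 + K) * (a + b) := by
  have hle : a * (1 + K) ≤ K * (a + b) := by
    calc a * (1 + K) = a + K * a := by ring
      _ ≤ K * b + K * a := by gcongr
      _ = K * (a + b) := by ring
  rw [ENNReal.mul_comm_div, ← mul_div_assoc]
  exact ENNReal.le_div_iff_mul_le (by simp) (by simp [hK]) |>.2 hle

lemma tendsto_div_one_add_pow {K : ℝ≥0∞} (hK : K ≠ ∞) :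
    Tendsto (fun k : ℕ => (K / (1 + K)) ^ k) atTop (𝓝 0) := by
  apply ENNReal.tendsto_pow_atTop_nhds_zero_of_lt_one
  apply ENNReal.div_lt_of_lt_mul
  rw [one_mul, add_comm]
  exact ENNReal.lt_add_right hK one_ne_zero

namespace IsDoublingWith

variable {X : Type*} [PseudoMetricSpace X] [MeasurableSpace X] {μ : Measure X} {C : ℝ≥0}

lemma measure_ball_two_pow_mul_le (hμ : IsDoublingWith μ C) (z : X) {r : ℝ} (hr : 0 < r) (n : ℕ) :
    μ (ball z (2 ^ n * r)) ≤ C ^ n * μ (ball z r) := by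
  induction n with
  | zero => simp
  | succ n ih =>
    calc μ (ball z (2 ^ (n + 1) * r)) = μ (ball z (2 * (2 ^ n * r))) := by ring_nf
      _ ≤ C * μ (ball z (2 ^ n * r)) := hμ z _ (by positivity)
      _ ≤ C * (C ^ n * μ (ball z r)) := by gcongr
      _ = C ^ (n + 1) * μ (ball z r) := by ring

variable [TopologicalSpace.SeparableSpace X] [OpensMeasurableSpace X]

lemma measure_le_of_forall_exists_closedBall_subset (hμ : IsDoublingWith μ C) {s : ℝ} (hs : 0 < s)
    {A B : Set X} (hAB : ∀ x ∈ A, ∃ y, dist x y ≤ 2 * s ∧ closedBall y s ⊆ B) :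
    μ A ≤ C ^ 3 * μ B := by
  obtain ⟨u, huB, hdisj, hcover⟩ := Vitali.exists_disjoint_subfamily_covering_enlargement_closedBall
    {y | closedBall y s ⊆ B} id (fun _ => s) s (fun _ _ => le_rfl) 5 (by norm_num)
  have hdisj_ball : u.PairwiseDisjoint (fun y => ball y s) :=
    hdisj.mono fun _ => ball_subset_closedBall
  have hu : u.Countable := hdisj_ball.countable_of_isOpen (fun _ _ => isOpen_ball)
    (fun y _ => ⟨y, mem_ball_self hs⟩)
  have hA : A ⊆ ⋃ y ∈ u, ball y (2 ^ 3 * s) := by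
    intro x hx
    obtain ⟨y, hxy, hyB⟩ := hAB x hx
    obtain ⟨b, hb, hyb⟩ := hcover y hyB
    have hdist : dist y b ≤ 5 * s := hyb (mem_closedBall_self hs.le)
    refine mem_biUnion hb (mem_ball.2 ?_)
    linarith [dist_triangle x y b]
  calc μ A ≤ μ (⋃ y ∈ u, ball y (2 ^ 3 * s)) := measure_mono hA
    _ ≤ ∑' y : u, μ (ball (y : X) (2 ^ 3 * s)) := measure_biUnion_le μ hu _
    _ ≤ ∑' y : u, C ^ 3 * μ (ball (y : X) s) :=
        ENNReal.tsum_le_tsum fun y => hμ.measure_ball_two_pow_mul_le y hs 3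
    _ = C ^ 3 * μ (⋃ y ∈ u, ball y s) := by
        rw [ENNReal.tsum_mul_left, measure_biUnion hu hdisj_ball fun _ _ => measurableSet_ball]
    _ ≤ C ^ 3 * μ B := by
        gcongr
        exact iUnion₂_subset fun y hy => ball_subset_closedBall.trans (huB hy)

variable [IsMetricallyConvex X]

lemma measure_annulus_le_inner_annulus (hμ : IsDoublingWith μ C) (z : X) {R s : ℝ} (hs : 0 < s)
    (hR : 4 * s ≤ R) :
    μ (ball z R \ ball z (R - s)) ≤ C ^ 3 * μ (ball z (R - s) \ ball z (R - 4 * s)) := by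
  refine hμ.measure_le_of_forall_exists_closedBall_subset hs fun x ⟨hxR, hxs⟩ => ?_
  rw [mem_ball] at hxR
  rw [mem_ball, not_lt] at hxs
  obtain ⟨y, hxy, hyz⟩ := IsMetricallyConvex.exists_dist_eq x z (2 * s) ⟨by linarith, by linarith⟩
  refine ⟨y, hxy.le, fun w hw => ?_⟩
  rw [mem_closedBall] at hw
  refine ⟨mem_ball.2 ?_, fun hwz => ?_⟩
  · linarith [dist_triangle w y z]
  · linarith [dist_triangle_left y z w, mem_ball.1 hwz]

lemma measure_annulus_le_wider_annulus (hμ : IsDoublingWith μ C) (z : X) {R s : ℝ} (hs : 0 < s)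
    (hR : 4 * s ≤ R) :
    μ (ball z R \ ball z (R - s)) ≤
      C ^ 3 / (1 + C ^ 3) * μ (ball z R \ ball z (R - 4 * s)) := by
  have hsplit : μ (ball z R \ ball z (R - 4 * s)) =
      μ (ball z R \ ball z (R - s)) + μ (ball z (R - s) \ ball z (R - 4 * s)) := by
    rw [← sdiff_union_sdiff_cancel (ball_subset_ball (by linarith : R - s ≤ R))
      (ball_subset_ball (by linarith : R - 4 * s ≤ R - s))]
    exact measure_union (disjoint_sdiff_left.mono_right sdiff_subset)
      (measurableSet_ball.diff measurableSet_ball)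
  rw [hsplit]
  exact le_div_one_add_mul_add_of_le_mul (by finiteness)
    (hμ.measure_annulus_le_inner_annulus z hs hR)

lemma measure_annulus_le_pow_mul (hμ : IsDoublingWith μ C) (z : X) {r : ℝ} (hr : 0 < r) (k : ℕ) :
    μ (ball z r \ ball z (r - r / 4 ^ k)) ≤ (C ^ 3 / (1 + C ^ 3)) ^ k * μ (ball z r) := by
  induction k with
  | zero => simpa only [pow_zero, one_mul] using measure_mono sdiff_subset
  | succ k ih =>
    have hwidth : 4 * (r / 4 ^ (k + 1)) = r / 4 ^ k := by
      field_simp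
      ring
    have hle : r / 4 ^ k ≤ r := div_le_self hr.le (one_le_pow₀ (by norm_num))
    have hstep := hμ.measure_annulus_le_wider_annulus z (by positivity) (hwidth.trans_le hle)
    rw [hwidth] at hstep
    rw [pow_succ' (_ / _ : ℝ≥0∞), mul_assoc]
    exact hstep.trans (by gcongr)

lemma exists_measure_annulus_le (hμ : IsDoublingWith μ C) {η : ℝ≥0∞} (hη : η ≠ 0) :
    ∃ δ ∈ Ioc (0 : ℝ) (1 / 2), ∀ (z : X) (r : ℝ), 0 < r →
      μ (ball z r \ ball z ((1 - δ) * r)) ≤ η * μ (ball z r) := by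
  have hsmall : ∀ᶠ k : ℕ in atTop, ((C : ℝ≥0∞) ^ 3 / (1 + C ^ 3)) ^ k < η :=
    (tendsto_div_one_add_pow (by finiteness)).eventually_lt_const hη.bot_lt
  obtain ⟨k, hkη, hk⟩ := (hsmall.and (eventually_ge_atTop 1)).exists
  have hwidth : (1 / 4 ^ k : ℝ) ≤ 1 / 2 := by
    gcongr
    linarith [le_self_pow₀ (by norm_num : (1 : ℝ) ≤ 4) (Nat.one_le_iff_ne_zero.1 hk)]
  refine ⟨1 / 4 ^ k, ⟨by positivity, hwidth⟩, fun z r hr => ?_⟩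
  rw [sub_mul, one_mul, one_div_mul_eq_div]
  exact (hμ.measure_annulus_le_pow_mul z hr k).trans (by gcongr)

lemma eventually_one_sub_mul_measure_ball_le (hμ : IsDoublingWith μ C) {η : ℝ} (hη : 0 < η) :
    ∀ᶠ δ in 𝓝 (0 : ℝ), ∀ (z : X) (r : ℝ), 0 < r →
      ENNReal.ofReal (1 - η) * μ (ball z r) ≤ μ (ball z ((1 - δ) * r)) := by
  obtain ⟨δ₀, ⟨hδ₀, hδ₀_half⟩, hannulus⟩ :=
    hμ.exists_measure_annulus_le (ENNReal.ofReal_pos.2 hη).ne'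
  filter_upwards [gt_mem_nhds hδ₀] with δ hδ z r hr
  suffices hinner : ENNReal.ofReal (1 - η) * μ (ball z r) ≤ μ (ball z ((1 - δ₀) * r)) from
    hinner.trans (measure_mono (ball_subset_ball (by gcongr)))
  rcases eq_or_ne (μ (ball z ((1 - δ₀) * r))) ∞ with htop | hfin
  · rw [htop]
    exact le_top
  have hfin_ball : μ (ball z r) ≠ ∞ := by
    refine ne_top_of_le_ne_top (ENNReal.mul_ne_top (ENNReal.coe_ne_top (r := C)) hfin) ?_
    calc μ (ball z r) ≤ μ (ball z (2 * ((1 - δ₀) * r))) :=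
          measure_mono (ball_subset_ball (by nlinarith))
      _ ≤ C * μ (ball z ((1 - δ₀) * r)) := hμ z _ (mul_pos (by linarith) hr)
  rw [ENNReal.ofReal_sub _ hη.le, ENNReal.ofReal_one, ENNReal.sub_mul fun _ _ => hfin_ball, one_mul,
    tsub_le_iff_left]
  calc μ (ball z r) ≤ μ (ball z r \ ball z ((1 - δ₀) * r)) + μ (ball z ((1 - δ₀) * r)) :=
        tsub_le_iff_right.1 le_measure_sdiff
    _ ≤ ENNReal.ofReal η * μ (ball z r) + μ (ball z ((1 - δ₀) * r)) := by
        gcongr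
        exact hannulus z r hr

lemma eventually_measure_ball_le_one_add_mul (hμ : IsDoublingWith μ C) {η : ℝ} (hη : 0 < η) :
    ∀ᶠ δ in 𝓝 (0 : ℝ), ∀ (z : X) (r : ℝ), 0 < r →
      μ (ball z ((1 + δ) * r)) ≤ ENNReal.ofReal (1 + η) * μ (ball z r) := by
  have hcancel : ENNReal.ofReal (1 + η) * ENNReal.ofReal (1 - η / (1 + η)) = 1 := by
    rw [← ENNReal.ofReal_mul (by positivity), ← ENNReal.ofReal_one]
    congr 1
    field_simp
    ring
  have hshrink : Tendsto (fun δ : ℝ => δ / (1 + δ)) (𝓝 0) (𝓝 0) := by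
    have hcont : ContinuousAt (fun δ : ℝ => δ / (1 + δ)) 0 := by fun_prop (disch := norm_num)
    simpa using hcont.tendsto
  have hlower := hshrink.eventually
    (hμ.eventually_one_sub_mul_measure_ball_le (by positivity : 0 < η / (1 + η)))
  filter_upwards [hlower, lt_mem_nhds (by norm_num : (-1 : ℝ) < 0)] with δ hδ hδ_neg z r hr
  have hpos : 0 < 1 + δ := by linarith
  have hradius : (1 - δ / (1 + δ)) * ((1 + δ) * r) = r := by
    field_simp
    ring
  have hball := hδ z ((1 + δ) * r) (by positivity)
  rw [hradius] at hball
  calc μ (ball z ((1 + δ) * r))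
      = ENNReal.ofReal (1 + η) *
          (ENNReal.ofReal (1 - η / (1 + η)) * μ (ball z ((1 + δ) * r))) := by
        rw [← mul_assoc, hcancel, one_mul]
    _ ≤ ENNReal.ofReal (1 + η) * μ (ball z r) := by gcongr

end IsDoublingWith

theorem annulus_mass_ratio_general {X : Type*} [PseudoMetricSpace X] [IsMetricallyConvex X]
    [TopologicalSpace.SeparableSpace X] [MeasurableSpace X] [OpensMeasurableSpace X]
    {μ : Measure X} {C : ℝ≥0} (hμ : IsDoublingWith μ C) {ρ : X → ℝ} (hρ : ∀ z, 0 < ρ z)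
    {ε : ℝ → ℝ} (hlim : Tendsto (fun r => ε r / r) atTop (𝓝 0)) :
    ∀ η : ℝ, 0 < η → ∃ R : ℝ, ∀ r : ℝ, R ≤ r → ∀ z : X,
      μ (ball z ((r + ε r) * ρ z)) ≤ ENNReal.ofReal (1 + η) * μ (ball z (r * ρ z)) ∧
      ENNReal.ofReal (1 - η) * μ (ball z (r * ρ z)) ≤ μ (ball z ((r - ε r) * ρ z)) := by
  intro η hη
  have hupper := hlim.eventually (hμ.eventually_measure_ball_le_one_add_mul hη)
  have hlower := hlim.eventually (hμ.eventually_one_sub_mul_measure_ball_le hη)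
  refine eventually_atTop.1 ?_
  filter_upwards [hupper, hlower, eventually_gt_atTop 0] with r hupper hlower hr z
  have hadd : (r + ε r) * ρ z = (1 + ε r / r) * (r * ρ z) := by field_simp
  have hsub : (r - ε r) * ρ z = (1 - ε r / r) * (r * ρ z) := by field_simp
  have hradius : 0 < r * ρ z := mul_pos hr (hρ z)
  rw [hadd, hsub]
  exact ⟨hupper z _ hradius, hlower z _ hradius⟩

/-- The mass of a disk `D^r(z)` is not concentrated near its boundary: if
`ε(r)/r → 0` then `μ(D^{r±ε(r)}(z))/μ(D^r(z)) → 1` uniformly in `z`. -/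
theorem annulus_mass_ratio
    (μ : Measure ℂ) (Cd : ℝ≥0) (hCd : 0 < Cd) (hd : IsDoubling μ Cd) (hne : μ ≠ 0)
    (ρ : ℂ → ℝ) (hρ : IsRadius μ ρ)
    (ε : ℝ → ℝ) (hε : ∀ r, 0 < ε r)
    (hlim : Tendsto (fun r => ε r / r) atTop (𝓝 0)) :
    ∀ η : ℝ, 0 < η → ∃ R : ℝ, ∀ r : ℝ, R ≤ r → ∀ z : ℂ,
      μ (ball z ((r + ε r) * ρ z)) ≤
        ENNReal.ofReal (1 + η) * μ (ball z (r * ρ z)) ∧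
      ENNReal.ofReal (1 - η) * μ (ball z (r * ρ z)) ≤
        μ (ball z ((r - ε r) * ρ z)) :=
  annulus_mass_ratio_general hd (fun z => (hρ z).1) hlim

end
end
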